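/- The function κ(c) + ρ(c) is concave on (0,∞), where κ(c) = 3/(2c·log²c) − (2c+1)/(c(c−1)·log c) + (c+2)/(2(c−1)²) and ρ(c) = 3/(2·log²c) − (c+2)/((c−1)·log c) + (1+2c)/(2(1−c)²), both extended continuously at c = 1. -/

import Mathlib

noncomputable def kappa (c : ℝ) : ℝ :=
  3 / (2 * c * (Real.log c) ^ 2) - (2 * c + 1) / (c * (c - 1) * Real.log c) +
    (c + 2) / (2 * (c - 1) ^ 2)

noncomputable def rho (c : ℝ) : ℝ :=
  3 / (2 * (Real.log c) ^ 2) - (c + 2) / ((c - 1) * Real.log c) +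
    (1 + 2 * c) / (2 * (1 - c) ^ 2)

namespace ExpPoly

/-- Evaluation of a polynomial given by its list of integer coefficients. -/
noncomputable def pev : List ℤ → ℝ → ℝ
  | [], _ => 0
  | a :: p, t => (a : ℝ) + t * pev p t

def addl : List ℤ → List ℤ → List ℤ
  | [], q => q
  | a :: p, [] => a :: p
  | a :: p, b :: q => (a + b) :: addl p q

def smul (m : ℤ) : List ℤ → List ℤ
  | [] => []
  | a :: p => (m * a) :: smul m p

def dl : List ℤ → List ℤ
  | [] => []
  | _ :: p => addl p (0 :: dl p)

theorem pev_addl (p q : List ℤ) (t : ℝ) : pev (addl p q) t = pev p t + pev q t := by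
  induction p generalizing q with
  | nil => simp [addl, pev]
  | cons a p ih =>
    cases q with
    | nil => simp [addl, pev]
    | cons b q => simp only [addl, pev, ih]; push_cast; ring

theorem pev_smul (m : ℤ) (p : List ℤ) (t : ℝ) : pev (smul m p) t = m * pev p t := by
  induction p with
  | nil => simp [smul, pev]
  | cons a p ih => simp only [smul, pev, ih]; push_cast; ring

theorem pev_deriv (p : List ℤ) (t : ℝ) : HasDerivAt (pev p) (pev (dl p) t) t := by
  induction p with
  | nil => simpa [pev, dl] using hasDerivAt_const t (0 : ℝ)
  | cons a p ih =>
    have h := ((hasDerivAt_id t).mul ih).const_add (a : ℝ)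
    have e : pev (a :: p) = fun x => (a : ℝ) + ((id : ℝ → ℝ) * pev p) x := by
      funext x; simp [pev]
    rw [e]
    refine h.congr_deriv ?_
    simp only [dl, pev_addl, pev, id]; push_cast; ring

/-- Evaluation of an exponential polynomial, a list of pairs (exponent, coefficient polynomial). -/
noncomputable def ev : List (ℤ × List ℤ) → ℝ → ℝ
  | [], _ => 0
  | (k, p) :: D, t => Real.exp (k * t) * pev p t + ev D t

/-- The operator `d/dt - m`. -/
def op (m : ℤ) : List (ℤ × List ℤ) → List (ℤ × List ℤ)
  | [] => []
  | (k, p) :: D => (k, addl (dl p) (smul (k - m) p)) :: op m D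

theorem ev_deriv (m : ℤ) (D : List (ℤ × List ℤ)) (t : ℝ) :
    HasDerivAt (ev D) (ev (op m D) t + m * ev D t) t := by
  induction D with
  | nil => simpa [ev, op] using hasDerivAt_const t (0 : ℝ)
  | cons kp D ih =>
    obtain ⟨k, p⟩ := kp
    have h1 : HasDerivAt (fun x : ℝ => Real.exp (k * x)) (Real.exp (k * t) * (k * 1)) t :=
      ((hasDerivAt_id t).const_mul (k : ℝ)).exp
    have h := (h1.mul (pev_deriv p t)).add ih
    have e : ev ((k, p) :: D) = (fun x : ℝ => Real.exp (k * x)) * pev p + ev D := by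
      funext x; simp [ev]
    rw [e]
    refine h.congr_deriv ?_
    simp only [op, ev, pev_addl, pev_smul, Pi.add_apply, Pi.mul_apply]; push_cast; ring

def pval : List ℤ → ℤ
  | [] => 0
  | a :: _ => a

def val : List (ℤ × List ℤ) → ℤ
  | [] => 0
  | (_, p) :: D => pval p + val D

theorem ev_zero (D : List (ℤ × List ℤ)) : ev D 0 = val D := by
  induction D with
  | nil => simp [ev, val]
  | cons kp D ih =>
    obtain ⟨k, p⟩ := kp
    cases p <;> simp [ev, val, ih, pev, pval]

def ppos : List ℤ → Bool
  | [] => true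
  | a :: p => decide (0 ≤ a) && ppos p

def pos : List (ℤ × List ℤ) → Bool
  | [] => true
  | (_, p) :: D => ppos p && pos D

theorem pev_nonneg (p : List ℤ) (h : ppos p = true) (t : ℝ) (ht : 0 ≤ t) : 0 ≤ pev p t := by
  induction p with
  | nil => simp [pev]
  | cons a p ih =>
    simp only [ppos, Bool.and_eq_true, decide_eq_true_eq] at h
    have h1 := ih h.2
    have h2 : (0 : ℝ) ≤ a := by exact_mod_cast h.1
    simp only [pev]; positivity

theorem ev_nonneg (D : List (ℤ × List ℤ)) (h : pos D = true) (t : ℝ) (ht : 0 ≤ t) :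
    0 ≤ ev D t := by
  induction D with
  | nil => simp [ev]
  | cons kp D ih =>
    obtain ⟨k, p⟩ := kp
    simp only [pos, Bool.and_eq_true] at h
    have h1 := ih h.2
    have h2 := pev_nonneg p h.1 t ht
    simp only [ev]; positivity

/-- Certificate checker: apply the operators in turn, with nonnegative initial values, until all
coefficients are nonnegative. -/
def chk : List ℤ → List (ℤ × List ℤ) → Bool
  | [], D => pos D
  | m :: ms, D => decide (0 ≤ val D) && chk ms (op m D)

theorem chk_sound (ms : List ℤ) (D : List (ℤ × List ℤ)) (h : chk ms D = true) (t : ℝ)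
    (ht : 0 ≤ t) : 0 ≤ ev D t := by
  induction ms generalizing D t with
  | nil => exact ev_nonneg D h t ht
  | cons m ms ih =>
    simp only [chk, Bool.and_eq_true, decide_eq_true_eq] at h
    have h0 : 0 ≤ ev D 0 := by rw [ev_zero]; exact_mod_cast h.1
    have hd : ∀ x : ℝ, HasDerivAt (fun x : ℝ => Real.exp (-m * x) * ev D x)
        (Real.exp (-m * x) * ev (op m D) x) x := by
      intro x
      have h1 : HasDerivAt (fun x : ℝ => Real.exp (-m * x)) (Real.exp (-m * x) * (-m * 1)) x :=
        ((hasDerivAt_id x).const_mul (-m : ℝ)).exp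
      refine (h1.mul (ev_deriv m D x)).congr_deriv ?_
      ring
    have hm : MonotoneOn (fun x : ℝ => Real.exp (-m * x) * ev D x) (Set.Ici 0) := by
      apply monotoneOn_of_deriv_nonneg (convex_Ici 0)
      · exact fun x _ => (hd x).continuousAt.continuousWithinAt
      · exact fun x _ => (hd x).differentiableAt.differentiableWithinAt
      · intro x hx
        rw [interior_Ici] at hx
        rw [(hd x).deriv]
        have := ih (op m D) h.2 x (le_of_lt hx)
        positivity
    have h2 := hm (Set.mem_Ici.2 le_rfl) (Set.mem_Ici.2 ht) ht
    simp only [mul_zero, Real.exp_zero, one_mul] at h2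
    exact nonneg_of_mul_nonneg_right (h0.trans h2) (Real.exp_pos _)

end ExpPoly

/-- The numerator of minus the second derivative, with `L = log c`. -/
def numer (c L : ℝ) : ℝ :=
  (-9 + 27 * c - 18 * c ^ 2 - 18 * c ^ 3 + 27 * c ^ 4 - 9 * c ^ 5) +
  (-11 + 31 * c - 26 * c ^ 2 + 2 * c ^ 3 + 5 * c ^ 4 - c ^ 5) * L +
  (-6 + 19 * c - 10 * c ^ 2 - 12 * c ^ 3 + 8 * c ^ 4 + c ^ 5) * L ^ 2 +
  (-2 + 8 * c - 12 * c ^ 2 - 4 * c ^ 3 + 10 * c ^ 4) * L ^ 3 +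
  (-15 * c ^ 3 - 3 * c ^ 4) * L ^ 4

theorem exp_int_mul (k : ℕ) (t : ℝ) : Real.exp (k * t) = Real.exp t ^ k := Real.exp_nat_mul t k

theorem numer_nonneg_pos (t : ℝ) (ht : 0 ≤ t) : 0 ≤ numer (Real.exp t) t := by
  have h := ExpPoly.chk_sound
    [0, 0, 0, 0, 0, 0, -1, -1, -1, -1, -1, -1, -1, -1, -1, -1, -1, -1, 1, 1, 1, 1, 1, 1,
      2, 2, 2, 2, 2, 2, 3, 3, 3, 3, 3, 3, 4, 4, 4, 4, 4]
    [(0, [-9, -11, -6, -2]), (1, [27, 31, 19, 8]), (2, [-18, -26, -10, -12]),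
      (3, [-18, 2, -12, -4, -15]), (4, [27, 5, 8, 10, -3]), (5, [-9, -1, 1])]
    (by decide +kernel) t ht
  have e2 := exp_int_mul 2 t
  have e3 := exp_int_mul 3 t
  have e4 := exp_int_mul 4 t
  have e5 := exp_int_mul 5 t
  push_cast at e2 e3 e4 e5
  simp only [ExpPoly.ev, ExpPoly.pev] at h
  push_cast at h
  rw [zero_mul, one_mul, e2, e3, e4, e5, Real.exp_zero] at h
  unfold numer
  linarith

theorem numer_nonneg_neg (t : ℝ) (ht : t ≤ 0) : 0 ≤ numer (Real.exp t) t := by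
  have h := ExpPoly.chk_sound
    [0, -1, -2, -3, -3, -4, -4, -4, -5, -5, -5]
    [(0, [-9, 11, -6, 2]), (-1, [27, -31, 19, -8]), (-2, [-18, 26, -10, 12]),
      (-3, [-18, -2, -12, 4, -15]), (-4, [27, -5, 8, -10, -3]), (-5, [-9, 1, 1])]
    (by decide +kernel) (-t) (by linarith)
  have e2 := exp_int_mul 2 t
  have e3 := exp_int_mul 3 t
  have e4 := exp_int_mul 4 t
  have e5 := exp_int_mul 5 t
  push_cast at e2 e3 e4 e5
  simp only [ExpPoly.ev, ExpPoly.pev] at h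
  push_cast at h
  simp only [neg_mul_neg] at h
  rw [zero_mul, one_mul, e2, e3, e4, e5, Real.exp_zero] at h
  unfold numer
  linarith

theorem numer_nonneg (c : ℝ) (hc : 0 < c) : 0 ≤ numer c (Real.log c) := by
  have e := Real.exp_log hc
  rcases le_total 0 (Real.log c) with h | h
  · simpa [e] using numer_nonneg_pos _ h
  · simpa [e] using numer_nonneg_neg _ h

/-- Simplified form of `kappa + rho`. -/
noncomputable def G (c : ℝ) : ℝ :=
  3 / 2 * (Real.log c)⁻¹ ^ 2 + 3 / 2 * (c⁻¹ * (Real.log c)⁻¹ ^ 2)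
    - (c + 4 + c⁻¹) * ((c - 1)⁻¹ * (Real.log c)⁻¹) + 3 / 2 * ((c + 1) * (c - 1)⁻¹ ^ 2)

noncomputable def G1 (c : ℝ) : ℝ :=
  -3 * (c⁻¹ * (Real.log c)⁻¹ ^ 3) - 3 / 2 * (c⁻¹ ^ 2 * (Real.log c)⁻¹ ^ 2)
    - 3 * (c⁻¹ ^ 2 * (Real.log c)⁻¹ ^ 3)
    - (1 - c⁻¹ ^ 2) * ((c - 1)⁻¹ * (Real.log c)⁻¹)
    + (c + 4 + c⁻¹) * ((c - 1)⁻¹ ^ 2 * (Real.log c)⁻¹)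
    + (c + 4 + c⁻¹) * ((c - 1)⁻¹ * (c⁻¹ * (Real.log c)⁻¹ ^ 2))
    + 3 / 2 * (c - 1)⁻¹ ^ 2 - 3 * ((c + 1) * (c - 1)⁻¹ ^ 3)

theorem basic_derivs (c : ℝ) (hc : 0 < c) (h1 : c ≠ 1) :
    HasDerivAt (fun x : ℝ => x⁻¹) (-c⁻¹ ^ 2) c ∧
    HasDerivAt (fun x : ℝ => (x - 1)⁻¹) (-(c - 1)⁻¹ ^ 2) c ∧
    HasDerivAt (fun x : ℝ => (Real.log x)⁻¹) (-(c⁻¹ * (Real.log c)⁻¹ ^ 2)) c ∧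
    Real.log c ≠ 0 ∧ c - 1 ≠ 0 := by
  have hl : Real.log c ≠ 0 := Real.log_ne_zero_of_pos_of_ne_one hc h1
  have hm : c - 1 ≠ 0 := sub_ne_zero.2 h1
  refine ⟨?_, ?_, ?_, hl, hm⟩
  · refine (hasDerivAt_inv hc.ne').congr_deriv ?_; simp
  · refine (((hasDerivAt_id c).sub_const 1).fun_inv hm).congr_deriv ?_
    simp only [id]; field_simp
  · refine ((Real.hasDerivAt_log hc.ne').fun_inv hl).congr_deriv ?_
    field_simp

theorem hasDerivAt_G (c : ℝ) (hc : 0 < c) (h1 : c ≠ 1) : HasDerivAt G (G1 c) c := by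
  obtain ⟨hv, hw, hu, -, -⟩ := basic_derivs c hc h1
  have hi := hasDerivAt_id' c
  have := ((((hu.fun_pow 2).const_mul (3 / 2 : ℝ)).fun_add
    ((hv.fun_mul (hu.fun_pow 2)).const_mul (3 / 2 : ℝ))).fun_sub
    (((hi.add_const 4).fun_add hv).fun_mul (hw.fun_mul hu))).fun_add
    (((hi.add_const 1).fun_mul (hw.fun_pow 2)).const_mul (3 / 2 : ℝ))
  refine this.congr_deriv ?_
  unfold G1
  push_cast
  ring

theorem hasDerivAt_G1 (c : ℝ) (hc : 0 < c) (h1 : c ≠ 1) :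
    HasDerivAt G1 (-(numer c (Real.log c) / (c ^ 3 * Real.log c ^ 4 * (c - 1) ^ 4))) c := by
  obtain ⟨hv, hw, hu, hl, hm⟩ := basic_derivs c hc h1
  have hi := hasDerivAt_id' c
  have a1 := (hv.fun_mul (hu.fun_pow 3)).const_mul (-3 : ℝ)
  have a2 := ((hv.fun_pow 2).fun_mul (hu.fun_pow 2)).const_mul (3 / 2 : ℝ)
  have a3 := ((hv.fun_pow 2).fun_mul (hu.fun_pow 3)).const_mul (3 : ℝ)
  have a4 := ((hv.fun_pow 2).const_sub 1).fun_mul (hw.fun_mul hu)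
  have q := (hi.add_const 4).fun_add hv
  have a5 := q.fun_mul ((hw.fun_pow 2).fun_mul hu)
  have a6 := q.fun_mul (hw.fun_mul (hv.fun_mul (hu.fun_pow 2)))
  have a7 := (hw.fun_pow 2).const_mul (3 / 2 : ℝ)
  have a8 := ((hi.add_const 1).fun_mul (hw.fun_pow 3)).const_mul (3 : ℝ)
  have := ((((((a1.fun_sub a2).fun_sub a3).fun_sub a4).fun_add a5).fun_add a6).fun_add a7).fun_sub a8
  refine this.congr_deriv ?_
  unfold numer
  have hc' := hc.ne'
  generalize Real.log c = L at *
  push_cast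
  simp only [Nat.add_one_sub_one, pow_one, Nat.reduceSub]
  field_simp
  ring

theorem kr_eq_G (c : ℝ) (hc : 0 < c) (h1 : c ≠ 1) : kappa c + rho c = G c := by
  obtain ⟨-, -, -, hl, hm⟩ := basic_derivs c hc h1
  have hc' := hc.ne'
  have hm' : 1 - c ≠ 0 := fun h => hm (by linarith)
  have e : (1 - c) ^ 2 = (c - 1) ^ 2 := by ring
  unfold kappa rho G
  rw [e]
  field_simp
  ring

theorem stmt_15 (f : ℝ → ℝ) (hcont : ContinuousOn f (Set.Ioi (0:ℝ)))
    (hf : ∀ c : ℝ, 0 < c → c ≠ 1 → f c = kappa c + rho c) :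
    ConcaveOn ℝ (Set.Ioi (0:ℝ)) f := by
  have hfG : ∀ c : ℝ, 0 < c → c ≠ 1 → f =ᶠ[nhds c] G := by
    intro c hc h1
    filter_upwards [lt_mem_nhds hc, isOpen_ne.mem_nhds h1] with x hx hx1
    rw [hf x hx hx1, kr_eq_G x hx hx1]
  have hd1 : ∀ c : ℝ, 0 < c → c ≠ 1 → HasDerivAt f (G1 c) c := fun c hc h1 =>
    (hasDerivAt_G c hc h1).congr_of_eventuallyEq (hfG c hc h1)
  have hd2 : ∀ c : ℝ, 0 < c → c ≠ 1 → HasDerivAt (deriv f)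
      (-(numer c (Real.log c) / (c ^ 3 * Real.log c ^ 4 * (c - 1) ^ 4))) c := by
    intro c hc h1
    apply (hasDerivAt_G1 c hc h1).congr_of_eventuallyEq
    filter_upwards [lt_mem_nhds hc, isOpen_ne.mem_nhds h1] with x hx hx1
    exact (hd1 x hx hx1).deriv
  have hneg : ∀ c : ℝ, 0 < c → c ≠ 1 → deriv (deriv f) c ≤ 0 := by
    intro c hc h1
    rw [(hd2 c hc h1).deriv]
    have := numer_nonneg c hc
    have : 0 ≤ numer c (Real.log c) / (c ^ 3 * Real.log c ^ 4 * (c - 1) ^ 4) := by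
      have e1 : 0 ≤ Real.log c ^ 4 := by positivity
      have e2 : 0 ≤ (c - 1) ^ 4 := by positivity
      positivity
    linarith
  have hmer : MeromorphicAt f 1 := by
    have hG : MeromorphicAt G 1 := by
      have hlog : MeromorphicAt Real.log 1 := (analyticAt_log one_pos).meromorphicAt
      unfold G
      fun_prop
    apply hG.congr
    filter_upwards [self_mem_nhdsWithin, mem_nhdsWithin_of_mem_nhds (lt_mem_nhds one_pos)]
      with x hx hx0
    rw [hf x hx0 hx, kr_eq_G x hx0 hx]
  have han : AnalyticAt ℝ f 1 :=
    hmer.analyticAt (hcont.continuousAt (Ioi_mem_nhds one_pos))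
  have hneg1 : deriv (deriv f) 1 ≤ 0 := by
    have ht : Filter.Tendsto (deriv (deriv f)) (nhdsWithin 1 {1}ᶜ) (nhds (deriv (deriv f) 1)) :=
      han.deriv.deriv.continuousAt.tendsto.mono_left nhdsWithin_le_nhds
    apply le_of_tendsto ht
    filter_upwards [self_mem_nhdsWithin, mem_nhdsWithin_of_mem_nhds (lt_mem_nhds one_pos)]
      with x hx hx0
    exact hneg x hx0 hx
  apply concaveOn_of_deriv2_nonpos (convex_Ioi 0) hcont
  · rw [interior_Ioi]
    intro c hc
    by_cases h1 : c = 1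
    · subst h1; exact han.differentiableAt.differentiableWithinAt
    · exact (hd1 c hc h1).differentiableAt.differentiableWithinAt
  · rw [interior_Ioi]
    intro c hc
    by_cases h1 : c = 1
    · subst h1; exact han.deriv.differentiableAt.differentiableWithinAt
    · exact (hd2 c hc h1).differentiableAt.differentiableWithinAt
  · rw [interior_Ioi]
    intro c hc
    by_cases h1 : c = 1
    · subst h1; exact hneg1
    · exact hneg c hc h1
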